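/- arXiv:math/0307140 — 6 statements merged into one kernel-verified Lean document; each statement's English description precedes it below -/
import Mathlib

section
/- Let μ be a finite positive Borel measure on ℝ with Lebesgue decomposition μ = μ_s + z·Leb, let ẑ be a symmetric rearrangement of z, and let v̂ be the odd rearrangement of μ. Then for every x > 0, v̂(x) = (1/2)·sup{μ(A) : A ⊆ ℝ Borel, Leb(A) ≤ 2x}. (Formula (2.5) of Proposition 1.) -/
open MeasureTheory Set Filter
open scoped ENNReal

noncomputable section

/-- `waveSup μ s = sup { μ(A) : A ⊆ ℝ Borel, Leb(A) ≤ s }`. -/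
def waveSup (μ : Measure ℝ) (s : ℝ) : ℝ≥0∞ :=
  ⨆ (A : Set ℝ) (_ : MeasurableSet A) (_ : volume A ≤ ENNReal.ofReal s), μ A

/-- Between two nested measurable sets of reals, every intermediate finite value of Lebesgue
measure is attained. -/
theorem exists_measurableSet_between_volume_eq {S T : Set ℝ} (hS : MeasurableSet S)
    (hT : MeasurableSet T) (hST : S ⊆ T) (hfin : volume T ≠ ∞) {t : ℝ≥0∞}
    (hSt : volume S ≤ t) (htT : t ≤ volume T) :
    ∃ A, MeasurableSet A ∧ S ⊆ A ∧ A ⊆ T ∧ volume A = t := by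
  rcases htT.eq_or_lt with rfl | htT
  · exact ⟨T, hT, hST, Subset.rfl, rfl⟩
  set B : ℝ → Set ℝ := fun R => S ∪ (T ∩ Ioc (-R) R) with hB
  have hBm : ∀ R, MeasurableSet (B R) := fun R => hS.union (hT.inter measurableSet_Ioc)
  have hBT : ∀ R, B R ⊆ T := fun R => union_subset hST inter_subset_left
  have hBfin : ∀ R, volume (B R) ≠ ∞ := fun R => measure_ne_top_of_subset (hBT R) hfin
  have hmono : Monotone B := fun R R' h => by
    apply union_subset_union_right
    apply inter_subset_inter_right
    exact Ioc_subset_Ioc (by linarith) h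
  have hlip : LipschitzWith 2 (fun R => (volume (B R)).toReal) := by
    apply LipschitzWith.of_le_add_mul
    intro R' R
    rcases le_total R' R with h | h
    · have := ENNReal.toReal_mono (hBfin R) (measure_mono (μ := volume) (hmono h))
      have h2 : 0 ≤ ((2 : NNReal) : ℝ) * dist R' R := by positivity
      linarith
    · have hsub : B R' ⊆ B R ∪ (Ioc (-R') (-R) ∪ Ioc R R') := by
        rintro y (hy | ⟨hy, h1, h2⟩)
        · exact Or.inl (Or.inl hy)
        · by_cases h3 : y ≤ -R
          · exact Or.inr (Or.inl ⟨h1, h3⟩)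
          · by_cases h4 : R < y
            · exact Or.inr (Or.inr ⟨h4, h2⟩)
            · exact Or.inl (Or.inr ⟨hy, not_le.1 h3, not_lt.1 h4⟩)
      have h1 : volume (B R') ≤
          volume (B R) + (ENNReal.ofReal (R' - R) + ENNReal.ofReal (R' - R)) := by
        refine (measure_mono hsub).trans ((measure_union_le _ _).trans ?_)
        gcongr
        refine (measure_union_le _ _).trans ?_
        rw [Real.volume_Ioc, Real.volume_Ioc, show -R - -R' = R' - R by ring]
      have h2 := ENNReal.toReal_mono (by simp [hBfin R]) h1
      rw [ENNReal.toReal_add (hBfin R) (by simp), ENNReal.toReal_add (by simp) (by simp),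
        ENNReal.toReal_ofReal (by linarith)] at h2
      rw [Real.dist_eq, abs_of_nonneg (by linarith)]
      push_cast
      linarith
  have hlow : (volume (B 0)).toReal ≤ t.toReal :=
    ENNReal.toReal_mono (ne_top_of_lt htT) (by simpa [hB] using hSt)
  have hhigh : ∃ R, t.toReal ≤ (volume (B R)).toReal := by
    have hU : ⋃ R, B R = T := by
      refine Subset.antisymm (iUnion_subset hBT) fun y hy => mem_iUnion.2 ⟨|y| + 1, Or.inr ⟨hy, ?_⟩⟩
      constructor <;> linarith [neg_abs_le y, le_abs_self y]
    have hlim := tendsto_measure_iUnion_atTop (μ := volume) hmono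
    rw [hU] at hlim
    obtain ⟨R, hR⟩ := (hlim.eventually (lt_mem_nhds htT)).exists
    exact ⟨R, ENNReal.toReal_mono (hBfin R) hR.le⟩
  obtain ⟨R, hR⟩ := mem_range_of_exists_le_of_exists_ge hlip.continuous ⟨0, hlow⟩ hhigh
  exact ⟨B R, hBm R, subset_union_left, hBT R,
    (ENNReal.toReal_eq_toReal_iff' (hBfin R) (ne_top_of_lt htT)).1 hR⟩

/-- If `c₀` is a level of `f` corresponding to measure `t`, there is a set of measure at most `t`
meeting every superlevel set of `f` in the largest possible measure. -/
theorem exists_measurableSet_inter_superlevel_eq_min {f : ℝ → ℝ} (hf : Measurable f)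
    (hfin : ∀ c > 0, volume {y | c < f y} ≠ ∞) {t : ℝ≥0∞} {c₀ : ℝ} (hc₀ : 0 ≤ c₀)
    (hhigh : ∀ c > 0, c₀ ≤ c → volume {y | c < f y} ≤ t)
    (hlow : ∀ c > 0, c < c₀ → t ≤ volume {y | c < f y}) :
    ∃ A, MeasurableSet A ∧ volume A ≤ t ∧
      ∀ c > 0, volume ({y | c < f y} ∩ A) = min t (volume {y | c < f y}) := by
  have hm : ∀ c, MeasurableSet {y | c < f y} := fun c => measurableSet_lt measurable_const hf
  rcases hc₀.eq_or_lt with rfl | hpos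
  · refine ⟨{y | 0 < f y}, hm 0, ?_, fun c hc => ?_⟩
    · have hU : ⋃ n : ℕ, {y | 1 / ((n : ℝ) + 1) < f y} = {y | 0 < f y} := by
        ext y
        simp only [mem_iUnion, mem_ofPred_eq]
        exact ⟨fun ⟨n, hn⟩ => lt_trans Nat.one_div_pos_of_nat hn, exists_nat_one_div_lt⟩
      have hmono : Monotone fun n : ℕ => {y | 1 / ((n : ℝ) + 1) < f y} := fun m n hmn y hy =>
        show 1 / ((n : ℝ) + 1) < f y from lt_of_le_of_lt (Nat.one_div_le_one_div hmn) hy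
      rw [← hU, hmono.measure_iUnion]
      exact iSup_le fun n => hhigh _ Nat.one_div_pos_of_nat Nat.one_div_pos_of_nat.le
    · have hsub : {y | c < f y} ⊆ {y | 0 < f y} := fun y (hy : c < f y) => hc.trans hy
      rw [inter_eq_left.2 hsub, min_eq_right (hhigh c hc hc.le)]
  · have hge : t ≤ volume {y | c₀ ≤ f y} := by
      have hI : ⋂ n : ℕ, {y | c₀ - c₀ / 2 / ((n : ℝ) + 1) < f y} = {y | c₀ ≤ f y} := by
        ext y
        simp only [mem_iInter, mem_ofPred_eq]
        refine ⟨fun h => ?_, fun h n => ?_⟩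
        · by_contra! hlt
          obtain ⟨n, hn⟩ := exists_nat_one_div_lt (div_pos (sub_pos.2 hlt) (half_pos hpos))
          have h1 := h n
          rw [lt_div_iff₀ (half_pos hpos)] at hn
          have h2 : 1 / ((n : ℝ) + 1) * (c₀ / 2) = c₀ / 2 / ((n : ℝ) + 1) := by ring
          linarith
        · have : 0 < c₀ / 2 / ((n : ℝ) + 1) := by positivity
          linarith
      have hle : ∀ n : ℕ, 0 < c₀ / 2 / ((n : ℝ) + 1) ∧ c₀ / 2 / ((n : ℝ) + 1) ≤ c₀ / 2 :=
        fun n => ⟨by positivity, div_le_self (by positivity) (by linarith [n.cast_nonneg (α := ℝ)])⟩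
      have hanti : Antitone fun n : ℕ => {y | c₀ - c₀ / 2 / ((n : ℝ) + 1) < f y} := by
        intro m n hmn y hy
        simp only [mem_ofPred_eq] at hy ⊢
        have : c₀ / 2 / ((n : ℝ) + 1) ≤ c₀ / 2 / ((m : ℝ) + 1) := by gcongr
        linarith
      rw [← hI, hanti.measure_iInter (fun n => (hm _).nullMeasurableSet)
        ⟨0, hfin _ (by linarith [hle 0])⟩]
      exact le_iInf fun n => hlow _ (by linarith [hle n]) (by linarith [hle n])
    have hgefin : volume {y | c₀ ≤ f y} ≠ ∞ :=
      measure_ne_top_of_subset (fun y (hy : c₀ ≤ f y) => show c₀ / 2 < f y by linarith)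
        (hfin (c₀ / 2) (half_pos hpos))
    obtain ⟨A, hA, hSA, hAT, hAt⟩ := exists_measurableSet_between_volume_eq (hm c₀)
      (measurableSet_le measurable_const hf) (fun y (hy : c₀ < f y) => hy.le) hgefin
      (hhigh c₀ hpos le_rfl) hge
    refine ⟨A, hA, hAt.le, fun c hc => ?_⟩
    rcases lt_or_ge c c₀ with h | h
    · have hsub : A ⊆ {y | c < f y} := fun y hy => h.trans_le (hAT hy)
      rw [inter_eq_right.2 hsub, hAt, min_eq_left (hlow c hc h)]
    · have hsub : {y | c < f y} ⊆ A := fun y (hy : c < f y) => hSA (h.trans_lt hy)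
      rw [inter_eq_left.2 hsub, min_eq_right (hhigh c hc h)]

/-- The measure of a set that is symmetric about the origin is twice that of its positive half. -/
theorem volume_eq_two_mul_inter_Ioi {S : Set ℝ} (hS : ∀ y, -y ∈ S ↔ y ∈ S) :
    volume S = 2 * volume (S ∩ Ioi 0) := by
  have hneg : volume (S ∩ Iio 0) = volume (S ∩ Ioi 0) := by
    rw [← Measure.measure_neg volume (S ∩ Ioi 0)]
    congr 1
    ext y
    simp [hS]
  have hdiff : volume (S \ Ioi 0) = volume (S ∩ Iio 0) := by
    rw [sdiff_eq, compl_Ioi]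
    exact measure_congr ((ae_eq_refl S).inter Iio_ae_eq_Iic.symm)
  rw [← measure_inter_add_sdiff S (measurableSet_Ioi (a := (0 : ℝ))), hdiff, hneg, two_mul]

/-- Superlevel sets of an even function, antitone on the positive half-line, meet `(0, x]` in half
the minimum of `2x` and their measure. -/
theorem two_mul_volume_superlevel_inter_Ioc {g : ℝ → ℝ} (heven : ∀ y, g (-y) = g y)
    (hanti : AntitoneOn g (Ioi 0)) {x : ℝ} (hx : 0 < x) (c : ℝ) :
    2 * volume ({y | c < g y} ∩ Ioc 0 x) =
      min (ENNReal.ofReal (2 * x)) (volume {y | c < g y}) := by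
  rw [volume_eq_two_mul_inter_Ioi (S := {y | c < g y}) fun y => by simp [heven],
    ENNReal.ofReal_mul zero_le_two, ENNReal.ofReal_ofNat]
  have hvol : volume (Ioc 0 x) = ENNReal.ofReal x := by simp
  by_cases h : c < g x
  · have hsub : Ioc 0 x ⊆ {y | c < g y} := fun y hy =>
      h.trans_le (hanti (mem_Ioi.2 hy.1) (mem_Ioi.2 hx) hy.2)
    rw [inter_eq_right.2 hsub, hvol, min_eq_left]
    gcongr
    rw [← hvol]
    exact measure_mono fun y hy => ⟨hsub hy, hy.1⟩
  · have heq : {y | c < g y} ∩ Ioi 0 = {y | c < g y} ∩ Ioc 0 x := by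
      ext y
      refine ⟨fun ⟨h1, h2⟩ => ⟨h1, h2, ?_⟩, fun ⟨h1, h2⟩ => ⟨h1, h2.1⟩⟩
      by_contra! hlt
      exact h (lt_of_lt_of_le h1 (hanti (mem_Ioi.2 hx) h2 hlt.le))
    rw [heq, min_eq_right]
    gcongr
    rw [← hvol]
    exact measure_mono inter_subset_right

/-- The layer-cake formula on a subset. -/
theorem setLIntegral_ofReal_eq_lintegral_superlevel {f : ℝ → ℝ} (hf0 : ∀ y, 0 ≤ f y) {A : Set ℝ}
    (hA : MeasurableSet A) (hf : AEMeasurable f (volume.restrict A)) :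
    ∫⁻ y in A, ENNReal.ofReal (f y) = ∫⁻ c in Ioi 0, volume ({y | c < f y} ∩ A) := by
  rw [lintegral_eq_lintegral_meas_lt _ (Eventually.of_forall hf0) hf]
  simp_rw [Measure.restrict_apply' hA]

/-- The supremum defining `waveSup` in terms of the singular part and the distribution function
of the density. -/
theorem waveSup_add_withDensity (μs : Measure ℝ) (hsing : μs ⟂ₘ volume) {z : ℝ → ℝ}
    (hz : Measurable z) (hz0 : ∀ y, 0 ≤ z y) (hfin : ∀ c > 0, volume {y | c < z y} ≠ ∞)
    {s c₀ : ℝ} (hc₀ : 0 ≤ c₀)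
    (hhigh : ∀ c > 0, c₀ ≤ c → volume {y | c < z y} ≤ ENNReal.ofReal s)
    (hlow : ∀ c > 0, c < c₀ → ENNReal.ofReal s ≤ volume {y | c < z y}) :
    waveSup (μs + volume.withDensity fun y => ENNReal.ofReal (z y)) s =
      μs univ + ∫⁻ c in Ioi 0, min (ENNReal.ofReal s) (volume {y | c < z y}) := by
  have happ : ∀ A, MeasurableSet A →
      (μs + volume.withDensity fun y => ENNReal.ofReal (z y)) A =
        μs A + ∫⁻ c in Ioi 0, volume ({y | c < z y} ∩ A) := fun A hA => by
    rw [Measure.add_apply, withDensity_apply _ hA,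
      setLIntegral_ofReal_eq_lintegral_superlevel hz0 hA hz.aemeasurable]
  apply le_antisymm
  · refine iSup_le fun A => iSup_le fun hA => iSup_le fun hAs => ?_
    rw [happ A hA]
    gcongr with c
    · exact subset_univ A
    · exact le_min ((measure_mono inter_subset_right).trans hAs) (measure_mono inter_subset_left)
  · obtain ⟨A, hA, hAs, hAz⟩ :=
      exists_measurableSet_inter_superlevel_eq_min hz hfin hc₀ hhigh hlow
    obtain ⟨N, hN, hμN, hvN⟩ := hsing
    have hs : volume (A ∪ Nᶜ) ≤ ENNReal.ofReal s :=
      (measure_union_le _ _).trans (by rwa [hvN, add_zero])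
    refine le_trans ?_
      (le_iSup_of_le (A ∪ Nᶜ) (le_iSup_of_le (hA.union hN.compl) (le_iSup_of_le hs le_rfl)))
    rw [happ _ (hA.union hN.compl)]
    gcongr ?_ + ?_
    · rw [← union_compl_self N]
      refine (measure_union_le _ _).trans ?_
      rw [hμN, zero_add]
      exact measure_mono subset_union_right
    · refine setLIntegral_mono' measurableSet_Ioi fun c hc => ?_
      rw [← hAz c hc]
      gcongr
      exact subset_union_left

/-- Formula (2.5) of Proposition 1: for a finite positive Borel measure `μ` on `ℝ` with
Lebesgue decomposition `μ = μs + z·Leb`, a symmetric rearrangement `zhat` of `z` and the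
odd rearrangement `vhat` of `μ`, one has
`vhat x = (1/2) · sup { μ(A) : Leb(A) ≤ 2x }` for every `x > 0`. -/
theorem odd_rearrangement_formula
    (μ μs : Measure ℝ) [IsFiniteMeasure μ] [IsFiniteMeasure μs]
    (z : ℝ → ℝ) (hz_int : Integrable z) (hz_nonneg : ∀ x, 0 ≤ z x)
    (hsing : μs ⟂ₘ volume)
    (hdecomp : μ = μs + volume.withDensity (fun x => ENNReal.ofReal (z x)))
    (zhat : ℝ → ℝ)
    (hzhat_even : ∀ x, zhat (-x) = zhat x)
    (hzhat_nonneg : ∀ x, 0 ≤ zhat x)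
    (hzhat_anti : AntitoneOn zhat (Set.Ioi 0))
    (hzhat_rearr : ∀ c > 0, volume {x | c < zhat x} = volume {x | c < z x})
    (vhat : ℝ → ℝ)
    (hvhat_odd : ∀ x, vhat (-x) = -vhat x)
    (hvhat_pos : ∀ x > 0, vhat x = (μs Set.univ).toReal / 2 + ∫ y in (0:ℝ)..x, zhat y) :
    ∀ x > 0, vhat x = (waveSup μ (2 * x)).toReal / 2 := by
  intro x hx
  set z' : ℝ → ℝ := fun y => max (hz_int.aemeasurable.mk z y) 0 with hz'
  have hz'm : Measurable z' := hz_int.aemeasurable.measurable_mk.max measurable_const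
  have hae : z =ᵐ[volume] z' := by
    filter_upwards [hz_int.aemeasurable.ae_eq_mk] with y hy
    simp only [hz', ← hy, max_eq_left (hz_nonneg y)]
  have hlevel : ∀ c, volume {y | c < z' y} = volume {y | c < z y} := fun c =>
    measure_congr (by
      filter_upwards [hae] with y hy
      exact congrArg (c < ·) hy.symm)
  have hdist : ∀ c > 0, volume {y | c < z' y} = volume {y | c < zhat y} := fun c hc => by
    rw [hlevel, hzhat_rearr c hc]
  have hcake := two_mul_volume_superlevel_inter_Ioc hzhat_even hzhat_anti hx
  have hmin_low : ∀ c, c < zhat x → ENNReal.ofReal (2 * x) ≤ volume {y | c < zhat y} := by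
    intro c hc
    have hsub : Ioc 0 x ⊆ {y | c < zhat y} := fun y hy =>
      hc.trans_le (hzhat_anti (mem_Ioi.2 hy.1) (mem_Ioi.2 hx) hy.2)
    rw [← min_eq_left_iff, ← hcake c, inter_eq_right.2 hsub, Real.volume_Ioc, sub_zero,
      ENNReal.ofReal_mul zero_le_two, ENNReal.ofReal_ofNat]
  have hmin_high : ∀ c, zhat x ≤ c → volume {y | c < zhat y} ≤ ENNReal.ofReal (2 * x) := by
    intro c hc
    rw [volume_eq_two_mul_inter_Ioi (S := {y | c < zhat y}) fun y => by simp [hzhat_even],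
      ENNReal.ofReal_mul zero_le_two, ENNReal.ofReal_ofNat]
    gcongr
    rw [← sub_zero x, ← Real.volume_Ioc]
    refine measure_mono fun y hy => ⟨hy.2, ?_⟩
    by_contra! hlt
    exact absurd (hzhat_anti (mem_Ioi.2 hx) hy.2 hlt.le) (not_le.2 (hc.trans_lt hy.1))
  have hsup : waveSup μ (2 * x) =
      μs univ + 2 * ∫⁻ y in Ioc 0 x, ENNReal.ofReal (zhat y) := by
    have hmeas : AEMeasurable zhat (volume.restrict (Ioc 0 x)) :=
      aemeasurable_restrict_of_antitoneOn measurableSet_Ioc (hzhat_anti.mono fun y hy => hy.1)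
    have hdens : volume.withDensity (fun y => ENNReal.ofReal (z y)) =
        volume.withDensity fun y => ENNReal.ofReal (z' y) :=
      withDensity_congr_ae (hae.fun_comp ENNReal.ofReal)
    rw [hdecomp, hdens, waveSup_add_withDensity μs hsing hz'm (fun y => le_max_right _ _)
      (fun c hc => by rw [hlevel]; exact (hz_int.measure_gt_lt_top hc).ne) (hzhat_nonneg x)
      (fun c hc h => by rw [hdist c hc]; exact hmin_high c h)
      (fun c hc h => by rw [hdist c hc]; exact hmin_low c h),
      setLIntegral_ofReal_eq_lintegral_superlevel hzhat_nonneg measurableSet_Ioc hmeas,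
      ← lintegral_const_mul' _ _ ENNReal.ofNat_ne_top]
    congr 1
    refine setLIntegral_congr_fun measurableSet_Ioi fun c hc => ?_
    simp only [hdist c hc, hcake c]
  have hmeas : AEStronglyMeasurable zhat (volume.restrict (Ioc 0 x)) :=
    (aemeasurable_restrict_of_antitoneOn measurableSet_Ioc
      (hzhat_anti.mono fun y hy => hy.1)).aestronglyMeasurable
  have hne : waveSup μ (2 * x) ≠ ∞ := ne_top_of_le_ne_top (measure_ne_top μ univ)
    (iSup_le fun A => iSup_le fun _ => iSup_le fun _ => measure_mono (subset_univ A))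
  rw [hsup] at hne
  rw [hvhat_pos x hx, hsup, ENNReal.toReal_add (measure_ne_top _ _)
    (fun h => hne (by rw [h, add_top])), ENNReal.toReal_mul, intervalIntegral.integral_of_le hx.le,
    integral_eq_lintegral_of_nonneg_ae (Eventually.of_forall hzhat_nonneg) hmeas,
    ENNReal.toReal_ofNat]
  ring
end
end

section
/- Let μ be a finite positive Borel measure on ℝ, let v̂ be the odd rearrangement of μ, and let ν̂ be the Lebesgue–Stieltjes measure associated with (the right-continuous modification of) v̂, so that in particular ν̂({0}) = μ_s(ℝ). Then μ ⪯ ν̂ and ν̂ ⪯ μ; equivalently, for every s > 0, sup{μ(A) : A ⊆ ℝ Borel, Leb(A) ≤ s} = sup{ν̂(B) : B ⊆ ℝ Borel, Leb(B) ≤ s}. (Part of Proposition 1.) -/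
open MeasureTheory Set Filter
open scoped ENNReal

noncomputable section

/-- The partial ordering `μ ⪯ μ'` among positive measures on `ℝ`. -/
def MeasPrec (μ μ' : Measure ℝ) : Prop :=
  ∀ s > 0, waveSup μ s ≤ waveSup μ' s

/-- A set of finite Lebesgue measure has measurable subsets of every smaller measure. -/
theorem exists_measurableSet_subset_volume_eq {D : Set ℝ} (hD : MeasurableSet D)
    (hfin : volume D ≠ ∞) {t : ℝ≥0∞} (ht : t ≤ volume D) :
    ∃ E ⊆ D, MeasurableSet E ∧ volume E = t := by
  rcases ht.eq_or_lt with rfl | ht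
  · exact ⟨D, Subset.rfl, hD, rfl⟩
  rcases eq_or_ne t 0 with rfl | h0
  · exact ⟨∅, empty_subset _, .empty, measure_empty⟩
  set ρ : Measure ℝ := volume.restrict D with hρ
  have : IsFiniteMeasure ρ := ⟨by simpa [hρ] using hfin.lt_top⟩
  have hcont : Continuous fun r => ρ.real (Iic r) := by
    have h := (intervalIntegral.continuous_primitive (μ := ρ) (f := fun _ => (1 : ℝ))
      (fun a b => intervalIntegrable_const) 0).add_const (ρ.real (Iic 0))
    convert h using 2 with r
    rw [← intervalIntegral.integral_Iic_sub_Iic (by simp) (by simp)]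
    simp
  have htop : t ≠ ∞ := ht.ne_top
  obtain ⟨a, ha⟩ : ∃ a, ρ (Iic a) < t := by
    have h := tendsto_measure_iInter_atBot (μ := ρ) (s := fun r : ℝ => Iic r)
      (fun r => measurableSet_Iic.nullMeasurableSet) monotone_Iic ⟨0, measure_ne_top ρ _⟩
    have hempty : ⋂ r : ℝ, Iic r = ∅ :=
      eq_empty_of_forall_notMem fun x hx => (sub_one_lt x).not_ge (mem_iInter.1 hx (x - 1))
    rw [hempty, measure_empty] at h
    exact (h.eventually_lt_const (pos_iff_ne_zero.2 h0)).exists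
  obtain ⟨b, hb⟩ : ∃ b, t < ρ (Iic b) :=
    ((tendsto_measure_Iic_atTop ρ).eventually_const_lt (by simpa [hρ] using ht)).exists
  obtain ⟨r, hr⟩ := mem_range_of_exists_le_of_exists_ge hcont
    (c := t.toReal) ⟨a, ENNReal.toReal_mono htop ha.le⟩
    ⟨b, ENNReal.toReal_mono (measure_ne_top _ _) hb.le⟩
  refine ⟨Iic r ∩ D, inter_subset_right, measurableSet_Iic.inter hD, ?_⟩
  rw [← Measure.restrict_apply measurableSet_Iic]
  exact (ENNReal.toReal_eq_toReal_iff' (measure_ne_top ρ _) htop).1 hr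

/-- Upper level sets depend on the level in a right-continuous way. -/
theorem volume_lt_le_of_forall_gt {g : ℝ → ℝ} {a : ℝ} {s : ℝ≥0∞}
    (h : ∀ c > a, volume {x | c < g x} ≤ s) : volume {x | a < g x} ≤ s := by
  obtain ⟨u, hu, hau, hlim⟩ := exists_seq_strictAnti_tendsto a
  have hU : {x | a < g x} = ⋃ n, {x | u n < g x} := by
    ext x
    simp only [mem_ofPred_eq, mem_iUnion]
    exact ⟨fun hx => (hlim.eventually_lt_const hx).exists, fun ⟨n, hn⟩ => (hau n).trans hn⟩
  have hmono : Monotone fun n => {x | u n < g x} :=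
    fun m n hmn x hx => (hu.antitone hmn).trans_lt hx
  rw [hU, hmono.measure_iUnion]
  exact iSup_le fun n => h _ (hau n)

/-- The bathtub principle: some set of measure at most `s` meets every upper level set of `g`
in the largest possible measure. -/
theorem exists_bathtub_set {g : ℝ → ℝ} (hg : Measurable g)
    (hfin : ∀ c > 0, volume {x | c < g x} ≠ ∞) {s : ℝ≥0∞} (hs : 0 < s) :
    ∃ B, MeasurableSet B ∧ volume B ≤ s ∧
      ∀ c > 0, min s (volume {x | c < g x}) ≤ volume (B ∩ {x | c < g x}) := by
  have hmeas (c : ℝ) : MeasurableSet {x | c < g x} := measurableSet_lt measurable_const hg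
  have hanti : Antitone fun c => {x | c < g x} := fun c d hcd x hx => lt_of_le_of_lt hcd hx
  by_cases hall : ∀ c > 0, volume {x | c < g x} ≤ s
  · refine ⟨{x | 0 < g x}, hmeas 0, volume_lt_le_of_forall_gt hall, fun c hc => ?_⟩
    rw [inter_eq_right.2 (hanti hc.le)]
    exact min_le_right _ _
  push Not at hall
  obtain ⟨c₀, hc₀, hsc₀⟩ := hall
  obtain ⟨c₁, hc₁⟩ : ∃ c, volume {x | c < g x} < s := by
    have h := tendsto_measure_iInter_atTop (μ := volume)
      (fun c => (hmeas c).nullMeasurableSet) hanti ⟨1, hfin 1 one_pos⟩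
    have hempty : ⋂ c, {x | c < g x} = ∅ :=
      eq_empty_of_forall_notMem fun x hx => lt_irrefl (g x) (mem_iInter.1 hx (g x))
    rw [hempty, measure_empty] at h
    exact (h.eventually_lt_const hs).exists
  set S := {c | volume {x | c < g x} ≤ s}
  have hlow : ∀ c ∈ S, c₀ ≤ c := fun c hc => by
    by_contra! hlt
    exact ((measure_mono (hanti hlt.le)).trans hc).not_gt hsc₀
  have hSne : S.Nonempty := ⟨c₁, hc₁.le⟩
  have hpos : 0 < sInf S := hc₀.trans_le (le_csInf hSne hlow)
  have hbelow : ∀ c < sInf S, s < volume {x | c < g x} := fun c hc => by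
    by_contra! hle
    exact (csInf_le ⟨c₀, hlow⟩ hle).not_gt hc
  have hgt : volume {x | sInf S < g x} ≤ s := volume_lt_le_of_forall_gt fun c hc => by
    obtain ⟨d, hd, hdc⟩ := exists_lt_of_csInf_lt hSne hc
    exact (measure_mono (hanti hdc.le)).trans hd
  have hge : s ≤ volume {x | sInf S ≤ g x} := by
    obtain ⟨u, hu, hmem, hlim⟩ := exists_seq_strictMono_tendsto' hpos
    have hI : {x | sInf S ≤ g x} = ⋂ n, {x | u n < g x} := by
      ext x
      simp only [mem_ofPred_eq, mem_iInter]
      exact ⟨fun hx n => (hmem n).2.trans_le hx, fun hx => le_of_tendsto' hlim fun n => (hx n).le⟩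
    rw [hI]
    exact ge_of_tendsto' (tendsto_measure_iInter_atTop
      (fun n => (hmeas (u n)).nullMeasurableSet)
      (fun m n hmn => hanti (hu.monotone hmn)) ⟨0, hfin _ (hmem 0).1⟩)
      fun n => (hbelow _ (hmem n).2).le
  have hgefin : volume {x | sInf S ≤ g x} ≠ ∞ := by
    refine ne_top_of_le_ne_top (hfin (sInf S / 2) (half_pos hpos)) (measure_mono fun x hx => ?_)
    exact (half_lt_self hpos).trans_le hx
  have hsub : {x | sInf S < g x} ⊆ {x | sInf S ≤ g x} := fun x (hx : sInf S < g x) => hx.le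
  obtain ⟨E, hE, hEm, hEs⟩ := exists_measurableSet_subset_volume_eq
    (D := {x | sInf S ≤ g x} \ {x | sInf S < g x})
    (t := s - volume {x | sInf S < g x})
    ((measurableSet_le measurable_const hg).diff (hmeas _))
    (ne_top_of_le_ne_top hgefin (measure_mono sdiff_subset)) (by
      rw [measure_sdiff hsub (hmeas _).nullMeasurableSet (hfin _ hpos)]
      exact tsub_le_tsub_right hge _)
  have hB : volume ({x | sInf S < g x} ∪ E) = s := by
    rw [measure_union (disjoint_sdiff_right.mono_right hE) hEm, hEs, add_tsub_cancel_of_le hgt]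
  refine ⟨{x | sInf S < g x} ∪ E, (hmeas _).union hEm, hB.le, fun c hc => ?_⟩
  rcases le_or_gt (sInf S) c with h | h
  · rw [inter_eq_right.2 ((hanti h).trans subset_union_left)]
    exact min_le_right _ _
  · rw [inter_eq_left.2, hB]
    · exact min_le_left _ _
    · exact union_subset (hanti h.le) fun x hx => h.trans_le (hE hx).1

theorem volume_setOf_lt_ne_top {f : ℝ → ℝ} (hf : Integrable f) {c : ℝ} (hc : 0 < c) :
    volume {x | c < f x} ≠ ∞ :=
  (hf.measure_gt_lt_top hc).ne

theorem volume_setOf_lt_congr {f g : ℝ → ℝ} (h : f =ᵐ[volume] g) (c : ℝ) :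
    volume {x | c < f x} = volume {x | c < g x} :=
  measure_congr (eventuallyEq_set.2 (by filter_upwards [h] with x hx; simp [hx]))

/-- `waveSup` of an absolutely continuous measure depends only on the distribution of its
density. -/
theorem waveSup_withDensity_le {f g : ℝ → ℝ} (hf : AEMeasurable f)
    (hf0 : ∀ x, 0 ≤ f x) (hg : Integrable g) (hg0 : ∀ x, 0 ≤ g x)
    (hfg : ∀ c > 0, volume {x | c < f x} = volume {x | c < g x}) {s : ℝ} (hs : 0 < s) :
    waveSup (volume.withDensity fun x => ENNReal.ofReal (f x)) s ≤
      waveSup (volume.withDensity fun x => ENNReal.ofReal (g x)) s := by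
  refine iSup_le fun A => iSup_le fun hA => iSup_le fun hAs => ?_
  have hgm := hg.aemeasurable
  have hdist (c : ℝ) := volume_setOf_lt_congr hgm.ae_eq_mk c
  obtain ⟨B, hB, hBs, hopt⟩ := exists_bathtub_set hgm.measurable_mk
    (fun c hc => (hdist c) ▸ volume_setOf_lt_ne_top hg hc) (ENNReal.ofReal_pos.2 hs)
  refine le_trans ?_ (le_iSup₂_of_le B hB (le_iSup_of_le hBs le_rfl))
  rw [withDensity_apply _ hA, withDensity_apply _ hB,
    lintegral_eq_lintegral_meas_lt _ (ae_of_all _ hf0) hf.restrict,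
    lintegral_eq_lintegral_meas_lt _ (ae_of_all _ hg0) hgm.restrict]
  refine setLIntegral_mono' measurableSet_Ioi fun c hc => ?_
  calc volume.restrict A {x | c < f x}
      ≤ min (ENNReal.ofReal s) (volume {x | c < hgm.mk g x}) := by
        refine le_min ?_ ?_
        · exact (measure_mono (subset_univ _)).trans (by simpa using hAs)
        · rw [← hdist, ← hfg c hc]
          exact Measure.restrict_apply_le _ _
    _ ≤ volume (B ∩ {x | c < hgm.mk g x}) := hopt c hc
    _ = volume.restrict B {x | c < hgm.mk g x} := by
        rw [Measure.restrict_apply (measurableSet_lt measurable_const hgm.measurable_mk),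
          inter_comm]
    _ = volume.restrict B {x | c < g x} := measure_congr (eventuallyEq_set.2 (by
        filter_upwards [ae_restrict_of_ae hgm.ae_eq_mk] with x hx
        simp [← hx]))

/-- A singular part contributes its full mass to `waveSup`. -/
theorem waveSup_add_of_mutuallySingular {σ τ : Measure ℝ} (hσ : σ ⟂ₘ volume) (s : ℝ) :
    waveSup (σ + τ) s = σ univ + waveSup τ s := by
  apply le_antisymm
  · refine iSup_le fun A => iSup_le fun hA => iSup_le fun hAs => ?_
    rw [Measure.add_apply]
    exact add_le_add (measure_mono (subset_univ _))
      (le_iSup₂_of_le A hA (le_iSup_of_le hAs le_rfl))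
  · obtain ⟨N, hN, hσN, hvN⟩ := hσ
    have key (A : Set ℝ) (hA : MeasurableSet A) (hAs : volume A ≤ ENNReal.ofReal s) :
        σ univ + τ A ≤ waveSup (σ + τ) s := by
      refine le_trans ?_ (le_iSup₂_of_le (A ∪ Nᶜ) (hA.union hN.compl) (le_iSup_of_le ?_ le_rfl))
      · rw [Measure.add_apply]
        refine add_le_add ?_ (measure_mono subset_union_left)
        calc σ univ ≤ σ N + σ Nᶜ := by rw [measure_add_measure_compl hN]
          _ ≤ σ (A ∪ Nᶜ) := by
            rw [hσN, zero_add]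
            exact measure_mono subset_union_right
      · exact (measure_union_le _ _).trans (by rwa [hvN, add_zero])
    have hne : σ univ ≤ waveSup (σ + τ) s := by simpa using key ∅ .empty (by simp)
    rcases eq_or_ne (σ univ) ∞ with htop | htop
    · rw [htop] at hne ⊢
      exact le_top.trans hne
    · refine (ENNReal.le_sub_iff_add_le_left htop hne).1 ?_
      exact iSup_le fun A => iSup_le fun hA => iSup_le fun hAs =>
        (ENNReal.le_sub_iff_add_le_left htop hne).2 (key A hA hAs)

theorem aemeasurable_of_even_of_antitoneOn {f : ℝ → ℝ} (heven : ∀ x, f (-x) = f x)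
    (hanti : AntitoneOn f (Ioi 0)) : AEMeasurable f := by
  have hneg : MonotoneOn f (Iio 0) := fun x hx y hy hxy => by
    rw [← heven x, ← heven y]
    exact hanti (by simpa using hy) (by simpa using hx) (neg_le_neg hxy)
  rw [← Measure.restrict_univ (μ := (volume : Measure ℝ)), ← Iic_union_Ioi (a := (0 : ℝ)),
    aemeasurable_union_iff, ← Measure.restrict_congr_set (Iio_ae_eq_Iic (a := (0 : ℝ)))]
  exact ⟨aemeasurable_restrict_of_monotoneOn measurableSet_Iio hneg,
    aemeasurable_restrict_of_antitoneOn measurableSet_Ioi hanti⟩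

/-- The Stieltjes measure of an odd primitive with a jump of size `m` at the origin. -/
theorem stieltjes_measure_eq_dirac_add_withDensity {f v : ℝ → ℝ} {m : ℝ} (hm : 0 ≤ m)
    (hf : Integrable f) (hf0 : ∀ x, 0 ≤ f x) (heven : ∀ x, f (-x) = f x)
    (hodd : ∀ x, v (-x) = -v x) (hpos : ∀ x > 0, v x = m / 2 + ∫ y in (0 : ℝ)..x, f y)
    (hv : Monotone v) :
    hv.stieltjesFunction.measure =
      ENNReal.ofReal m • Measure.dirac 0 + volume.withDensity fun x => ENNReal.ofReal (f x) := by
  set F : ℝ → ℝ := fun x => ∫ y in (0 : ℝ)..x, f y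
  have hFc : Continuous F :=
    intervalIntegral.continuous_primitive (fun _ _ => hf.intervalIntegrable) 0
  have hFodd (x : ℝ) : F (-x) = -F x := by
    have h := intervalIntegral.integral_comp_neg (a := 0) (b := x) f
    simp only [heven, neg_zero] at h
    simp only [F]
    rw [h, intervalIntegral.integral_symm]
  have hneg (x : ℝ) (hx : x < 0) : v x = -(m / 2) + F x := by
    have h := hpos (-x) (neg_pos.2 hx)
    rw [hodd] at h
    have := hFodd x
    simp only [F] at this ⊢
    linarith
  have hright (x : ℝ) : hv.stieltjesFunction x = (if x < 0 then -(m / 2) else m / 2) + F x := by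
    rw [hv.stieltjesFunction_eq]
    have hlim (c : ℝ) : Tendsto (fun y => c + F y) (nhdsWithin x (Ioi x)) (nhds (c + F x)) :=
      (continuous_const.add hFc).continuousWithinAt
    refine tendsto_nhds_unique (hv.tendsto_rightLim x) ?_
    split_ifs with hx
    · refine (hlim _).congr' ?_
      filter_upwards [nhdsWithin_le_nhds (Iio_mem_nhds hx)] with y hy
      exact (hneg y hy).symm
    · refine (hlim _).congr' ?_
      filter_upwards [self_mem_nhdsWithin] with y hy
      exact (hpos y ((not_lt.1 hx).trans_lt hy)).symm
  refine Measure.ext_of_Ioc _ _ fun a b hab => ?_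
  have hFab : F b - F a = ∫ y in a..b, f y :=
    intervalIntegral.integral_interval_sub_left hf.intervalIntegrable hf.intervalIntegrable
  have hF0 : 0 ≤ F b - F a := hFab ▸ intervalIntegral.integral_nonneg hab.le fun x _ => hf0 x
  have hdens : (volume.withDensity fun x => ENNReal.ofReal (f x)) (Ioc a b) =
      ENNReal.ofReal (F b - F a) := by
    rw [withDensity_apply _ measurableSet_Ioc, hFab, intervalIntegral.integral_of_le hab.le,
      ofReal_integral_eq_lintegral_ofReal hf.integrableOn (ae_of_all _ hf0)]
  rw [StieltjesFunction.measure_Ioc, hright, hright, Measure.add_apply, hdens,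
    Measure.smul_apply, Measure.dirac_apply' _ measurableSet_Ioc, smul_eq_mul]
  by_cases ha : a < 0 <;> by_cases hb : b < 0
  · simp [ha, hb]
  · rw [indicator_of_mem (show (0 : ℝ) ∈ Ioc a b from ⟨ha, not_lt.1 hb⟩), Pi.one_apply, mul_one,
      ← ENNReal.ofReal_add hm hF0, if_pos ha, if_neg hb]
    congr 1
    ring
  · exact absurd (hab.trans hb) ha
  · simp [ha, hb]

/-- Part of Proposition 1: if `vhat` is the odd rearrangement of a finite positive
measure `μ` and `ν̂` is the Lebesgue–Stieltjes measure of (the right-continuous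
modification of) `vhat`, then `μ ⪯ ν̂` and `ν̂ ⪯ μ`. -/
theorem odd_rearrangement_equivalent
    (μ μs : Measure ℝ) [IsFiniteMeasure μ] [IsFiniteMeasure μs]
    (z : ℝ → ℝ) (hz_int : Integrable z) (hz_nonneg : ∀ x, 0 ≤ z x)
    (hsing : μs ⟂ₘ volume)
    (hdecomp : μ = μs + volume.withDensity (fun x => ENNReal.ofReal (z x)))
    (zhat : ℝ → ℝ)
    (hzhat_even : ∀ x, zhat (-x) = zhat x)
    (hzhat_nonneg : ∀ x, 0 ≤ zhat x)
    (hzhat_anti : AntitoneOn zhat (Set.Ioi 0))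
    (hzhat_rearr : ∀ c > 0, volume {x | c < zhat x} = volume {x | c < z x})
    (vhat : ℝ → ℝ)
    (hvhat_odd : ∀ x, vhat (-x) = -vhat x)
    (hvhat_pos : ∀ x > 0, vhat x = (μs Set.univ).toReal / 2 + ∫ y in (0:ℝ)..x, zhat y)
    (hvhat_mono : Monotone vhat) :
    MeasPrec μ hvhat_mono.stieltjesFunction.measure ∧
      MeasPrec hvhat_mono.stieltjesFunction.measure μ := by
  have hzm : AEMeasurable zhat := aemeasurable_of_even_of_antitoneOn hzhat_even hzhat_anti
  have hzhat_int : Integrable zhat := by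
    refine ⟨hzm.aestronglyMeasurable, ?_⟩
    rw [hasFiniteIntegral_iff_ofReal (ae_of_all _ hzhat_nonneg),
      lintegral_eq_lintegral_meas_lt _ (ae_of_all _ hzhat_nonneg) hzm,
      setLIntegral_congr_fun measurableSet_Ioi fun c hc => hzhat_rearr c hc,
      ← lintegral_eq_lintegral_meas_lt _ (ae_of_all _ hz_nonneg) hz_int.aemeasurable,
      ← hasFiniteIntegral_iff_ofReal (ae_of_all _ hz_nonneg)]
    exact hz_int.2
  have hdirac : (μs univ • Measure.dirac (0 : ℝ)) ⟂ₘ volume :=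
    (mutuallySingular_dirac 0 volume).smul _
  have hν := stieltjes_measure_eq_dirac_add_withDensity ENNReal.toReal_nonneg hzhat_int
    hzhat_nonneg hzhat_even hvhat_odd hvhat_pos hvhat_mono
  rw [ENNReal.ofReal_toReal (measure_ne_top _ _)] at hν
  have hmass : (μs univ • Measure.dirac (0 : ℝ)) univ = μs univ := by simp
  constructor <;> intro s hs <;>
    rw [hν, hdecomp, waveSup_add_of_mutuallySingular hsing,
      waveSup_add_of_mutuallySingular hdirac, hmass] <;>
    gcongr 1
  · exact waveSup_withDensity_le hz_int.aemeasurable hz_nonneg hzhat_int hzhat_nonneg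
      (fun c hc => (hzhat_rearr c hc).symm) hs
  · exact waveSup_withDensity_le hzm hzhat_nonneg hz_int hz_nonneg hzhat_rearr hs
end
end

section
/- Let μ and μ' be finite positive Borel measures on ℝ, and let J₁, …, J_N be pairwise disjoint Borel subsets of ℝ with J₁ ∪ ⋯ ∪ J_N = ℝ. If for every ℓ ∈ {1, …, N} the restricted measures satisfy μ⌊J_ℓ ⪯ μ'⌊J_ℓ, then μ ⪯ μ'. (Proposition 2.) -/
open MeasureTheory Set Filter
open scoped ENNReal

noncomputable section

/-- If `c ≤ μ (B n)` for a sequence of sets with summable `ν`-measures, then their limsup is a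
measurable `ν`-null set of `μ`-measure at least `c`. -/
lemma exists_measurableSet_null_le_measure {α : Type*} [MeasurableSpace α] (ν μ : Measure α)
    [IsFiniteMeasure μ] {c : ℝ≥0∞} {B : ℕ → Set α} (hB : ∀ n, MeasurableSet (B n))
    (hsum : ∑' n, ν (B n) ≠ ∞) (hc : ∀ n, c ≤ μ (B n)) :
    ∃ C, MeasurableSet C ∧ ν C = 0 ∧ c ≤ μ C := by
  refine ⟨limsup B atTop, MeasurableSet.measurableSet_limsup hB,
    measure_limsup_atTop_eq_zero hsum, ?_⟩
  have hlim : limsup B atTop = ⋂ n, ⋃ k, B (k + n) := by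
    rw [limsup_eq_iInf_iSup_of_nat']
    rfl
  have hanti : Antitone fun n => ⋃ k, B (k + n) := by
    refine antitone_nat_of_succ_le fun n => iUnion_subset fun k => ?_
    exact subset_iUnion_of_subset (k + 1) (by rw [add_right_comm, add_assoc])
  rw [hlim]
  refine ge_of_tendsto' (tendsto_measure_iInter_atTop
    (fun n => (MeasurableSet.iUnion fun k => hB _).nullMeasurableSet) hanti
    ⟨0, measure_ne_top _ _⟩) fun n => ?_
  exact (hc (0 + n)).trans (measure_mono (subset_iUnion (fun k => B (k + n)) 0))

lemma exists_lt_measure_of_lt_waveSup {μ : Measure ℝ} {s : ℝ} {c : ℝ≥0∞} (h : c < waveSup μ s) :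
    ∃ B, MeasurableSet B ∧ volume B ≤ ENNReal.ofReal s ∧ c < μ B := by
  simpa only [waveSup, lt_iSup_iff, exists_prop] using h

lemma le_waveSup {μ : Measure ℝ} {s : ℝ} {A : Set ℝ} (hA : MeasurableSet A)
    (hs : volume A ≤ ENNReal.ofReal s) : μ A ≤ waveSup μ s :=
  le_iSup_of_le A (le_iSup_of_le hA (le_iSup_of_le hs le_rfl))

/-- If `μ ⪯ μ'`, every value `c < μ A` is reached by `μ'` on a set no larger than `A`, including
when `A` is Lebesgue null. -/
lemma MeasPrec.exists_le_measure {μ μ' : Measure ℝ} [IsFiniteMeasure μ'] (h : MeasPrec μ μ')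
    {A : Set ℝ} (hA : MeasurableSet A) (hfin : volume A ≠ ∞) {c : ℝ≥0∞} (hc : c < μ A) :
    ∃ B, MeasurableSet B ∧ volume B ≤ volume A ∧ c ≤ μ' B := by
  have key : ∀ s > 0, volume A ≤ ENNReal.ofReal s →
      ∃ B, MeasurableSet B ∧ volume B ≤ ENNReal.ofReal s ∧ c < μ' B := fun s hs hAs =>
    exists_lt_measure_of_lt_waveSup (hc.trans_le ((le_waveSup hA hAs).trans (h s hs)))
  rcases eq_or_ne (volume A) 0 with h0 | h0
  · choose B hBm hBv hBc using fun n : ℕ => key ((1 / 2) ^ n) (by positivity) (by simp [h0])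
    obtain ⟨C, hCm, hC0, hCc⟩ := exists_measurableSet_null_le_measure volume μ' hBm
      (ne_top_of_le_ne_top summable_geometric_two.tsum_ofReal_ne_top (ENNReal.tsum_le_tsum hBv))
      fun n => (hBc n).le
    exact ⟨C, hCm, by simp [hC0], hCc⟩
  · obtain ⟨B, hBm, hBv, hBc⟩ := key (volume A).toReal (ENNReal.toReal_pos h0 hfin)
      (ENNReal.ofReal_toReal hfin).ge
    exact ⟨B, hBm, hBv.trans_eq (ENNReal.ofReal_toReal hfin), hBc.le⟩

lemma measure_eq_sum_inter_of_partition {α ι : Type*} [MeasurableSpace α] [Fintype ι]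
    (μ : Measure α) {J : ι → Set α} (hJmeas : ∀ i, MeasurableSet (J i))
    (hJdisj : Pairwise (Function.onFun Disjoint J)) (hJcover : ⋃ i, J i = univ)
    {A : Set α} (hA : MeasurableSet A) : μ A = ∑ i, μ (A ∩ J i) := by
  rw [← tsum_fintype (L := .unconditional ι), ← measure_iUnion
    (fun i j hij => (hJdisj hij).mono inter_subset_right inter_subset_right)
    fun i => hA.inter (hJmeas i), ← inter_iUnion, hJcover, inter_univ]

/-- Proposition 2: if `ℝ = J₁ ∪ ⋯ ∪ J_N` is a finite Borel partition and the
restrictions satisfy `μ⌊J_ℓ ⪯ μ'⌊J_ℓ` for every `ℓ`, then `μ ⪯ μ'`. -/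
theorem prec_of_partition
    (μ μ' : Measure ℝ) [IsFiniteMeasure μ] [IsFiniteMeasure μ']
    (N : ℕ) (J : Fin N → Set ℝ)
    (hJmeas : ∀ ℓ, MeasurableSet (J ℓ))
    (hJdisj : Pairwise (Function.onFun Disjoint J))
    (hJcover : (⋃ ℓ, J ℓ) = Set.univ)
    (hrestr : ∀ ℓ, MeasPrec (μ.restrict (J ℓ)) (μ'.restrict (J ℓ))) :
    MeasPrec μ μ' := by
  intro s hs
  refine iSup_le fun A => iSup_le fun hA => iSup_le fun hAs => ?_
  refine ENNReal.le_of_forall_pos_le_add fun ε hε _ => ?_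
  obtain ⟨δ, hδ, hδε⟩ := ENNReal.exists_pos_sum_of_countable
    (ENNReal.coe_pos.2 hε).ne' (Fin N)
  have hex : ∀ ℓ, ∃ B, MeasurableSet B ∧ volume B ≤ volume (A ∩ J ℓ) ∧
      μ (A ∩ J ℓ) ≤ μ' (B ∩ J ℓ) + δ ℓ := by
    intro ℓ
    rcases eq_or_ne (μ (A ∩ J ℓ)) 0 with h0 | h0
    · exact ⟨∅, MeasurableSet.empty, by simp, by simp [h0]⟩
    have hAJ : MeasurableSet (A ∩ J ℓ) := hA.inter (hJmeas ℓ)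
    have hfin : volume (A ∩ J ℓ) ≠ ∞ := ne_top_of_le_ne_top ENNReal.ofReal_ne_top
      ((measure_mono inter_subset_left).trans hAs)
    have hlt : μ (A ∩ J ℓ) - δ ℓ < μ.restrict (J ℓ) (A ∩ J ℓ) := by
      rw [Measure.restrict_apply hAJ, inter_assoc, inter_self]
      exact ENNReal.sub_lt_self (measure_ne_top _ _) h0 (ENNReal.coe_pos.2 (hδ ℓ)).ne'
    obtain ⟨B, hBm, hBv, hBc⟩ := (hrestr ℓ).exists_le_measure hAJ hfin hlt
    rw [Measure.restrict_apply hBm] at hBc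
    exact ⟨B, hBm, hBv, tsub_le_iff_right.1 hBc⟩
  choose B hBm hBv hBc using hex
  have hBJm : ∀ ℓ, MeasurableSet (B ℓ ∩ J ℓ) := fun ℓ => (hBm ℓ).inter (hJmeas ℓ)
  have hBJdisj : Pairwise (Function.onFun Disjoint fun ℓ => B ℓ ∩ J ℓ) := fun i j hij =>
    (hJdisj hij).mono inter_subset_right inter_subset_right
  have hvol : volume (⋃ ℓ, B ℓ ∩ J ℓ) ≤ ENNReal.ofReal s := calc
    volume (⋃ ℓ, B ℓ ∩ J ℓ) ≤ ∑ ℓ, volume (B ℓ ∩ J ℓ) := measure_iUnion_fintype_le _ _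
    _ ≤ ∑ ℓ, volume (A ∩ J ℓ) :=
      Finset.sum_le_sum fun ℓ _ => (measure_mono inter_subset_left).trans (hBv ℓ)
    _ = volume A := (measure_eq_sum_inter_of_partition _ hJmeas hJdisj hJcover hA).symm
    _ ≤ ENNReal.ofReal s := hAs
  calc
    μ A = ∑ ℓ, μ (A ∩ J ℓ) := measure_eq_sum_inter_of_partition _ hJmeas hJdisj hJcover hA
    _ ≤ ∑ ℓ, (μ' (B ℓ ∩ J ℓ) + δ ℓ) := Finset.sum_le_sum fun ℓ _ => hBc ℓ
    _ = μ' (⋃ ℓ, B ℓ ∩ J ℓ) + ∑' ℓ, (δ ℓ : ℝ≥0∞) := by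
      rw [Finset.sum_add_distrib, measure_iUnion hBJdisj hBJm, tsum_fintype, tsum_fintype]
    _ ≤ waveSup μ' s + ε := add_le_add (le_waveSup (MeasurableSet.iUnion hBJm) hvol) hδε.le
end
end

section
/- Let (μ_ν) be a sequence of finite signed Borel measures on ℝ whose total variation measures |μ_ν| are uniformly bounded in mass and uniformly tight, and suppose μ_ν converges weakly to a finite signed Borel measure μ, i.e. ∫ f dμ_ν → ∫ f dμ for every bounded continuous f : ℝ → ℝ. Let μ_ν⁺ denote the positive part in the Jordan decomposition of μ_ν, and assume there are odd, nondecreasing functions w_ν : ℝ → ℝ, concave on (0,∞), such that for every ν, every s > 0 and every Borel set A with Leb(A) ≤ 2s one has μ_ν⁺(A) ≤ 2·w_ν(s). Define w(s) := liminf_{ν→∞} w_ν(s) ∈ [0,∞] for s > 0. Then the positive part μ⁺ of μ satisfies: for every s > 0 and every Borel set A with Leb(A) ≤ 2s, μ⁺(A) ≤ 2·w(s). (Proposition 4.) -/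
open MeasureTheory Set Filter
open scoped ENNReal Topology

noncomputable section

/-- The integral of `f` against a finite signed measure `σ`, defined through the
Jordan decomposition `σ = σ⁺ − σ⁻`. -/
def signedIntegral (σ : SignedMeasure ℝ) (f : ℝ → ℝ) : ℝ :=
  (∫ x, f x ∂σ.toJordanDecomposition.posPart) -
    (∫ x, f x ∂σ.toJordanDecomposition.negPart)

/-- A nonnegative function that is concave on `(0, ∞)` grows at most linearly. -/
lemma ConcaveOn.apply_add_le_of_nonneg {w : ℝ → ℝ} (hw : ConcaveOn ℝ (Ioi 0) w)
    (hnonneg : ∀ t > 0, 0 ≤ w t) {s δ : ℝ} (hs : 0 < s) (hδ : 0 < δ) :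
    w (s + δ) ≤ (1 + 2 * δ / s) * w s := by
  have hd : 0 < s + 2 * δ := by linarith
  have key := hw.2 (mem_Ioi.2 (half_pos hs)) (mem_Ioi.2 (add_pos hs hδ))
    (div_nonneg (by linarith) hd.le : 0 ≤ 2 * δ / (s + 2 * δ))
    (div_nonneg hs.le hd.le : 0 ≤ s / (s + 2 * δ)) (by field_simp; ring)
  simp only [smul_eq_mul] at key
  rw [show 2 * δ / (s + 2 * δ) * (s / 2) + s / (s + 2 * δ) * (s + δ) = s by
    field_simp; ring] at key
  have hhalf : 0 ≤ 2 * δ / (s + 2 * δ) * w (s / 2) :=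
    mul_nonneg (div_nonneg (by linarith) hd.le) (hnonneg _ (half_pos hs))
  calc w (s + δ) = (1 + 2 * δ / s) * (s / (s + 2 * δ) * w (s + δ)) := by
        field_simp
    _ ≤ (1 + 2 * δ / s) * w s := by
        gcongr
        linarith

section Cutoff

variable {m : Measure ℝ} [IsFiniteMeasure m] {f : ℝ → ℝ}

lemma integrable_of_continuous_of_mem_Icc (hf : Continuous f) (h01 : ∀ x, f x ∈ Icc (0 : ℝ) 1) :
    Integrable f m :=
  Integrable.of_mem_Icc 0 1 hf.aemeasurable (Eventually.of_forall h01)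

lemma integral_le_measureReal_of_eqOn_compl {U : Set ℝ} (hU : MeasurableSet U)
    (hf : Continuous f) (h01 : ∀ x, f x ∈ Icc (0 : ℝ) 1) (h0 : EqOn f 0 Uᶜ) :
    ∫ x, f x ∂m ≤ m.real U := by
  rw [← integral_indicator_one hU]
  refine integral_mono (integrable_of_continuous_of_mem_Icc hf h01)
    ((integrable_const 1).indicator hU) fun x => ?_
  by_cases hx : x ∈ U
  · simpa [hx] using (h01 x).2
  · simpa [hx] using (h0 hx).le

lemma measureReal_le_integral_of_eqOn {K : Set ℝ} (hK : MeasurableSet K)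
    (hf : Continuous f) (h01 : ∀ x, f x ∈ Icc (0 : ℝ) 1) (h1 : EqOn f 1 K) :
    m.real K ≤ ∫ x, f x ∂m := by
  rw [← integral_indicator_one hK]
  refine integral_mono ((integrable_const 1).indicator hK)
    (integrable_of_continuous_of_mem_Icc hf h01) fun x => ?_
  by_cases hx : x ∈ K
  · simpa [hx] using (h1 hx).ge
  · simpa [hx] using (h01 x).1

end Cutoff

/-- The positive part of a signed measure on a set is approximated from below by the integrals of
continuous cutoff functions supported in open sets of almost the same Lebesgue measure. -/
lemma exists_cutoff_posPart_lt (μ : SignedMeasure ℝ) {A : Set ℝ} (hA : MeasurableSet A)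
    {r : ℝ≥0∞} (hr : volume A < r) {ε : ℝ} (hε : 0 < ε) :
    ∃ (U : Set ℝ) (f : ℝ → ℝ), IsOpen U ∧ volume U < r ∧ Continuous f ∧
      (∀ x, f x ∈ Icc (0 : ℝ) 1) ∧ EqOn f 0 Uᶜ ∧
      μ.toJordanDecomposition.posPart.real A < signedIntegral μ f + ε := by
  set P := μ.toJordanDecomposition.posPart
  set N := μ.toJordanDecomposition.negPart
  obtain ⟨S, hS, hPS, hNS⟩ := μ.toJordanDecomposition.mutuallySingular
  have hε2 : ENNReal.ofReal (ε / 2) ≠ 0 := by simpa using hε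
  obtain ⟨K, hKA, hK, hPK⟩ :=
    (hA.diff hS).exists_isCompact_lt_add (measure_ne_top P _) hε2
  have hNK : N K = 0 := measure_mono_null (fun x hx => (hKA hx).2) hNS
  obtain ⟨U₁, hKU₁, hU₁, hvU₁⟩ := K.exists_isOpen_lt_of_lt r
    ((measure_mono (hKA.trans sdiff_subset)).trans_lt hr)
  obtain ⟨U₂, hKU₂, hU₂, hNU₂⟩ := K.exists_isOpen_lt_of_lt (μ := N) (ENNReal.ofReal (ε / 2))
    (hNK ▸ pos_iff_ne_zero.2 hε2)
  have hU := hU₁.inter hU₂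
  obtain ⟨f, hf0, hf1, hf01⟩ := exists_continuous_zero_one_of_isClosed hU.isClosed_compl
    hK.isClosed (disjoint_compl_left_iff_subset.2 (subset_inter hKU₁ hKU₂))
  refine ⟨U₁ ∩ U₂, f, hU, (measure_mono inter_subset_left).trans_lt hvU₁, f.continuous, hf01,
    hf0, ?_⟩
  have hPA : P.real A < P.real K + ε / 2 := by
    have hdiff : P (A \ S) = P A := measure_sdiff_null hPS
    rw [hdiff] at hPK
    have := ENNReal.toReal_strict_mono (by finiteness) hPK
    rwa [ENNReal.toReal_add (by finiteness) (by finiteness),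
      ENNReal.toReal_ofReal (by linarith)] at this
  have hNU : N.real (U₁ ∩ U₂) < ε / 2 :=
    (measureReal_mono inter_subset_right).trans_lt
      ((ENNReal.lt_ofReal_iff_toReal_lt (by finiteness)).1 hNU₂)
  have hPf := measureReal_le_integral_of_eqOn (m := P) hK.measurableSet f.continuous hf01 hf1
  have hNf := integral_le_measureReal_of_eqOn_compl (m := N) hU.measurableSet f.continuous hf01 hf0
  rw [signedIntegral]
  linarith

/-- Proposition 4: lower semicontinuity of the ordering `⪯` under weak convergence.
If signed measures `μ_ν → μ` weakly, with uniformly bounded and uniformly tight total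
variations, and the positive parts satisfy `μ_ν⁺(A) ≤ 2 w_ν(s)` whenever `Leb(A) ≤ 2s`,
for odd nondecreasing functions `w_ν` concave on `(0,∞)`, then the positive part of `μ`
satisfies `μ⁺(A) ≤ 2 w(s)` whenever `Leb(A) ≤ 2s`, where `w(s) = liminf_ν w_ν(s)`. -/
theorem positive_part_semicontinuity
    (μseq : ℕ → SignedMeasure ℝ) (μ : SignedMeasure ℝ)
    (hbound : ∃ C : ℝ, ∀ n, (μseq n).totalVariation Set.univ ≤ ENNReal.ofReal C)
    (htight : ∀ ε > 0, ∃ K : Set ℝ, IsCompact K ∧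
        ∀ n, (μseq n).totalVariation Kᶜ < ENNReal.ofReal ε)
    (hweak : ∀ f : ℝ → ℝ, Continuous f → (∃ C, ∀ x, |f x| ≤ C) →
        Tendsto (fun n => signedIntegral (μseq n) f) atTop (𝓝 (signedIntegral μ f)))
    (wseq : ℕ → ℝ → ℝ)
    (hw_odd : ∀ n, ∀ s, wseq n (-s) = -(wseq n s))
    (hw_mono : ∀ n, Monotone (wseq n))
    (hw_concave : ∀ n, ConcaveOn ℝ (Set.Ioi 0) (wseq n))
    (hw_dom : ∀ n, ∀ s > 0, ∀ A : Set ℝ, MeasurableSet A →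
        volume A ≤ ENNReal.ofReal (2 * s) →
        (μseq n).toJordanDecomposition.posPart A ≤ ENNReal.ofReal (2 * wseq n s)) :
    ∀ s > 0, ∀ A : Set ℝ, MeasurableSet A → volume A ≤ ENNReal.ofReal (2 * s) →
      μ.toJordanDecomposition.posPart A ≤
        2 * Filter.liminf (fun n => ENNReal.ofReal (wseq n s)) atTop := by
  intro s hs A hA hvA
  have hw_nonneg : ∀ n, ∀ t > 0, 0 ≤ wseq n t := fun n t ht => by
    have h := hw_mono n (show -t ≤ t by linarith)
    rw [hw_odd] at h
    linarith
  by_contra! hlt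
  set P := μ.toJordanDecomposition.posPart with hP
  set L := liminf (fun n => ENNReal.ofReal (wseq n s)) atTop
  have hLP : L < P A / 2 := by
    rwa [ENNReal.lt_div_iff_mul_lt (by simp) (by simp), mul_comm]
  obtain ⟨c, hLc, hcP⟩ := exists_between hLP
  have hfreq : ∃ᶠ n in atTop, ENNReal.ofReal (wseq n s) < c := frequently_lt_of_liminf_lt (h := hLc)
  have hc : c ≠ ⊤ := hcP.ne_top
  obtain ⟨b, hb⟩ : ∃ b, b = c.toReal := ⟨_, rfl⟩
  have hb0 : 0 ≤ b := hb ▸ ENNReal.toReal_nonneg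
  have hbP : 2 * b < P.real A := by
    rw [ENNReal.lt_div_iff_mul_lt (by simp) (by simp)] at hcP
    have := ENNReal.toReal_strict_mono (by finiteness) hcP
    rw [ENNReal.toReal_mul, ← hb] at this
    simp only [ENNReal.toReal_ofNat] at this
    rw [measureReal_def]
    linarith
  obtain ⟨g, hg⟩ : ∃ g, g = P.real A - 2 * b := ⟨_, rfl⟩
  have hg0 : 0 < g := by linarith
  obtain ⟨δ, hδ⟩ : ∃ δ, δ = s * g / (8 * (b + 1)) := ⟨_, rfl⟩
  have hδ0 : 0 < δ := by rw [hδ]; positivity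
  obtain ⟨U, f, hU, hvU, hf, hf01, hf0, hPf⟩ := exists_cutoff_posPart_lt μ hA
    (hvA.trans_lt ((ENNReal.ofReal_lt_ofReal_iff (by positivity)).2
      (by linarith : 2 * s < 2 * (s + δ)))) (half_pos hg0)
  have hlim : signedIntegral μ f ≤ 2 * ((1 + 2 * δ / s) * b) := by
    refine le_of_tendsto_of_frequently
      (hweak f hf ⟨1, fun x => abs_le.2 ⟨by linarith [(hf01 x).1], (hf01 x).2⟩⟩)
      (hfreq.mono fun n hn => ?_)
    have hwb : wseq n s ≤ b := hb ▸ (ENNReal.ofReal_le_iff_le_toReal hc).1 hn.le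
    have hPU := ENNReal.toReal_mono (by finiteness)
      (hw_dom n (s + δ) (by positivity) U hU.measurableSet hvU.le)
    rw [ENNReal.toReal_ofReal (mul_nonneg zero_le_two (hw_nonneg n _ (by positivity)))] at hPU
    have hPint := integral_le_measureReal_of_eqOn_compl
      (m := (μseq n).toJordanDecomposition.posPart) hU.measurableSet hf hf01 hf0
    rw [measureReal_def] at hPint
    have hNint : 0 ≤ ∫ x, f x ∂(μseq n).toJordanDecomposition.negPart :=
      integral_nonneg fun x => (hf01 x).1
    calc signedIntegral (μseq n) f ≤ 2 * wseq n (s + δ) := by rw [signedIntegral]; linarith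
      _ ≤ 2 * ((1 + 2 * δ / s) * wseq n s) := by
        gcongr
        exact (hw_concave n).apply_add_le_of_nonneg (hw_nonneg n) hs hδ0
      _ ≤ 2 * ((1 + 2 * δ / s) * b) := by gcongr
  have hsmall : 2 * ((1 + 2 * δ / s) * b) ≤ 2 * b + g / 2 := by
    have : 2 * δ / s * b = g / 4 * (b / (b + 1)) := by
      rw [hδ]
      field_simp
      ring
    have hle : b / (b + 1) ≤ 1 := (div_le_one (by positivity)).2 (by linarith)
    nlinarith
  rw [← hP] at hPf
  linarith
end
end

section
/- Let μ be a finite positive Borel measure on ℝ. Then the function F : [0,∞) → [0,∞) defined by F(s) := sup{μ(A) : A ⊆ ℝ Borel, Leb(A) ≤ s} is nondecreasing and concave on [0,∞). (Equivalently, by formula (2.5), the odd rearrangement v̂ of μ is concave for x > 0 and convex for x < 0.) -/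
open MeasureTheory Set Filter
open scoped ENNReal

noncomputable section

open ProbabilityTheory Topology in
/-- The distribution function of an atomless probability measure takes every value in `(0, 1)`. -/
lemma exists_cdf_eq (ν : Measure ℝ) [IsProbabilityMeasure ν] [NullSingletonClass ν] {t : ℝ}
    (ht : t ∈ Ioo (0 : ℝ) 1) : ∃ x, cdf ν x = t := by
  have hcont : Continuous (cdf ν) := by
    refine continuous_iff_continuousAt.2 fun x => ?_
    rw [(monotone_cdf ν).continuousAt_iff_leftLim_eq_rightLim, StieltjesFunction.rightLim_eq]
    have h := (cdf ν).measure_singleton x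
    rw [measure_cdf, measure_singleton, eq_comm, ENNReal.ofReal_eq_zero] at h
    exact le_antisymm ((monotone_cdf ν).leftLim_le le_rfl) (by linarith)
  exact mem_range_of_exists_le_of_exists_ge hcont
    ((((tendsto_cdf_atBot ν).eventually (gt_mem_nhds ht.1)).exists).imp fun _ h => h.le)
    ((((tendsto_cdf_atTop ν).eventually (lt_mem_nhds ht.2)).exists).imp fun _ h => h.le)

open ProbabilityTheory in
/-- **Probability integral transform**: the distribution function of an atomless probability
measure pushes this measure forward to the uniform distribution. -/
lemma measurePreserving_cdf (ν : Measure ℝ) [IsProbabilityMeasure ν] [NullSingletonClass ν] :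
    MeasurePreserving (cdf ν) ν (volume.restrict (Ioc 0 1)) := by
  have hmeas : Measurable (cdf ν) := (monotone_cdf ν).measurable
  refine ⟨hmeas, ?_⟩
  have := Measure.isProbabilityMeasure_map (μ := ν) hmeas.aemeasurable
  refine Measure.ext_of_Iic _ _ fun t => ?_
  rw [Measure.map_apply hmeas measurableSet_Iic, Measure.restrict_apply measurableSet_Iic,
    inter_comm, Ioc_inter_Iic, Real.volume_Ioc, sub_zero]
  refine le_antisymm ?_ ?_
  · rcases le_or_gt 1 t with h1 | h1
    · rw [min_eq_left h1, ENNReal.ofReal_one]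
      exact prob_le_one
    rw [min_eq_right h1.le]
    rcases lt_or_ge t 0 with h0 | h0
    · have : cdf ν ⁻¹' Iic t = ∅ :=
        eq_empty_of_forall_notMem fun x hx => (h0.trans_le (cdf_nonneg ν x)).not_ge hx
      simp [this]
    refine ge_of_tendsto
      ((ENNReal.continuous_ofReal.tendsto t).mono_left (nhdsWithin_le_nhds (s := Ioi t))) ?_
    filter_upwards [Ioo_mem_nhdsGT h1] with u hu
    obtain ⟨x, rfl⟩ := exists_cdf_eq ν ⟨h0.trans_lt hu.1, hu.2⟩
    rw [ofReal_cdf]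
    exact measure_mono fun y hy => ((monotone_cdf ν).reflect_lt (hy.trans_lt hu.1)).le
  · rcases le_or_gt 1 t with h1 | h1
    · have : cdf ν ⁻¹' Iic t = univ := eq_univ_of_forall fun x => (cdf_le_one ν x).trans h1
      simp [this, h1]
    rw [min_eq_right h1.le]
    rcases le_or_gt t 0 with h0 | h0
    · simp [ENNReal.ofReal_of_nonpos h0]
    obtain ⟨x, rfl⟩ := exists_cdf_eq ν ⟨h0, h1⟩
    rw [ofReal_cdf]
    exact measure_mono fun y hy => monotone_cdf ν hy

open ProbabilityTheory in
/-- Given an atomless probability measure `ν` and a finite measure `μ` on the line, some set of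
`ν`-measure `a` carries at least the fraction `a` of the mass of `μ`. -/
lemma exists_measure_eq_and_mul_le (ν μ : Measure ℝ) [IsProbabilityMeasure ν] [NullSingletonClass ν]
    [IsFiniteMeasure μ] {a : ℝ} (ha : a ≤ 1) :
    ∃ E, MeasurableSet E ∧ ν E = ENNReal.ofReal a ∧ ENNReal.ofReal a * μ univ ≤ μ E := by
  have hmk := UnitAddCircle.measurePreserving_mk 0
  rw [zero_add] at hmk
  have hφ := hmk.comp (measurePreserving_cdf ν)
  set φ : ℝ → UnitAddCircle := (fun x : ℝ => (x : UnitAddCircle)) ∘ cdf ν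
  have hvol : ∀ t : UnitAddCircle,
      volume (Metric.closedBall t (a / 2)) = ENNReal.ofReal a := fun t => by
    rw [AddCircle.volume_closedBall, mul_div_cancel₀ a two_ne_zero, min_eq_right ha]
  have hS : MeasurableSet {p : UnitAddCircle × ℝ | dist (φ p.2) p.1 ≤ a / 2} :=
    measurableSet_le ((hφ.measurable.comp measurable_snd).dist measurable_fst) measurable_const
  have hint : ∫⁻ t : UnitAddCircle, μ (φ ⁻¹' Metric.closedBall t (a / 2)) =
      ENNReal.ofReal a * μ univ := by
    have h₁ := Measure.prod_apply (μ := (volume : Measure UnitAddCircle)) (ν := μ) hS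
    have h₂ := Measure.prod_apply_symm (μ := (volume : Measure UnitAddCircle)) (ν := μ) hS
    refine (h₁.symm.trans h₂).trans ?_
    rw [← lintegral_const]
    refine lintegral_congr fun x => ?_
    rw [← hvol (φ x)]
    congr 1
    ext t
    simp [dist_comm]
  have hprob : IsProbabilityMeasure (volume : Measure UnitAddCircle) :=
    ⟨UnitAddCircle.measure_univ⟩
  obtain ⟨t, ht⟩ := exists_lintegral_le (μ := (volume : Measure UnitAddCircle))
    (f := fun t => μ (φ ⁻¹' Metric.closedBall t (a / 2)))
    (by rw [hint]; exact ENNReal.mul_ne_top ENNReal.ofReal_ne_top (measure_ne_top _ _))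
  refine ⟨_, hφ.measurable Metric.isClosed_closedBall.measurableSet, ?_, hint ▸ ht⟩
  rw [hφ.measure_preimage Metric.isClosed_closedBall.measurableSet.nullMeasurableSet, hvol]

open ProbabilityTheory in
/-- Every set `D` of finite Lebesgue measure has a subset of at most the fraction `a` of its
Lebesgue measure which carries at least the fraction `a` of its `μ`-measure. -/
lemma exists_subset_volume_le_and_mul_le (μ : Measure ℝ) [IsFiniteMeasure μ] {D : Set ℝ}
    (hD : MeasurableSet D) (hfin : volume D ≠ ∞) {a : ℝ} (ha : a ≤ 1) :
    ∃ E ⊆ D, MeasurableSet E ∧ volume E ≤ ENNReal.ofReal a * volume D ∧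
      ENNReal.ofReal a * μ D ≤ μ E := by
  by_cases h0 : volume D = 0
  · refine ⟨D, Subset.rfl, hD, by simp [h0], ?_⟩
    exact mul_le_of_le_one_left' (ENNReal.ofReal_le_one.2 ha)
  have hprob : IsProbabilityMeasure (volume[|D]) := cond_isProbabilityMeasure_of_finite h0 hfin
  have hatoms : NullSingletonClass (volume[|D]) :=
    ⟨fun x => cond_absolutelyContinuous (measure_singleton x)⟩
  obtain ⟨E, hE, hνE, hμE⟩ := exists_measure_eq_and_mul_le (volume[|D]) (μ.restrict D) ha
  refine ⟨D ∩ E, inter_subset_left, hD.inter hE, ?_, ?_⟩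
  · rw [← hνE, cond_mul_eq_inter' hD hfin]
  · rwa [Measure.restrict_apply_univ, Measure.restrict_apply hE, inter_comm] at hμE

lemma measure_le_waveSup (μ : Measure ℝ) {s : ℝ} {A : Set ℝ} (hA : MeasurableSet A)
    (hs : volume A ≤ ENNReal.ofReal s) : μ A ≤ waveSup μ s :=
  le_iSup₂_of_le A hA (le_iSup_of_le hs le_rfl)

lemma waveSup_mono (μ : Measure ℝ) : Monotone (waveSup μ) := fun _ _ h =>
  iSup₂_le fun _ hA => iSup_le fun hs =>
    measure_le_waveSup μ hA (hs.trans (ENNReal.ofReal_le_ofReal h))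

lemma waveSup_ne_top (μ : Measure ℝ) [IsFiniteMeasure μ] (s : ℝ) : waveSup μ s ≠ ∞ :=
  ne_top_of_le_ne_top (measure_ne_top μ univ)
    (iSup₂_le fun _ _ => iSup_le fun _ => measure_mono (subset_univ _))

/-- Interpolation between two competitors for `waveSup`. -/
lemma mul_measure_add_mul_measure_le_waveSup (μ : Measure ℝ) [IsFiniteMeasure μ] {s t a b : ℝ}
    (hs : 0 ≤ s) (ht : 0 ≤ t) (ha : 0 ≤ a) (hb : 0 ≤ b) (hab : a + b = 1) {A B : Set ℝ}
    (hA : MeasurableSet A) (hB : MeasurableSet B) (hAs : volume A ≤ ENNReal.ofReal s)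
    (hBt : volume B ≤ ENNReal.ofReal t) :
    ENNReal.ofReal a * μ A + ENNReal.ofReal b * μ B ≤ waveSup μ (a * s + b * t) := by
  have hfin {C D : Set ℝ} {r : ℝ} (h : volume C ≤ ENNReal.ofReal r) : volume (C \ D) ≠ ∞ :=
    ne_top_of_le_ne_top ENNReal.ofReal_ne_top ((measure_mono sdiff_subset).trans h)
  obtain ⟨E, hEA, hE, hvE, hμE⟩ := exists_subset_volume_le_and_mul_le μ (hA.diff hB)
    (hfin hAs) (show a ≤ 1 by linarith)
  obtain ⟨G, hGB, hG, hvG, hμG⟩ := exists_subset_volume_le_and_mul_le μ (hB.diff hA)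
    (hfin hBt) (show b ≤ 1 by linarith)
  have hsum : ENNReal.ofReal a + ENNReal.ofReal b = 1 := by
    rw [← ENNReal.ofReal_add ha hb, hab, ENNReal.ofReal_one]
  have hsplit (ν : Measure ℝ) : ENNReal.ofReal a * ν A + ENNReal.ofReal b * ν B =
      ν (A ∩ B) + ENNReal.ofReal a * ν (A \ B) + ENNReal.ofReal b * ν (B \ A) := by
    rw [← measure_inter_add_sdiff A hB, ← measure_inter_add_sdiff B hA, inter_comm B A]
    nth_rewrite 3 [← one_mul (ν (A ∩ B))]
    rw [← hsum]
    ring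
  have hunion (ν : Measure ℝ) : ν (A ∩ B ∪ E ∪ G) = ν (A ∩ B) + ν E + ν G := by
    rw [measure_union _ hG, measure_union _ hE]
    · exact disjoint_left.2 fun x hx hxE => (hEA hxE).2 hx.2
    · exact disjoint_left.2 fun x hx hxG => (hGB hxG).2 (hx.elim And.left fun h => (hEA h).1)
  calc ENNReal.ofReal a * μ A + ENNReal.ofReal b * μ B
      ≤ μ (A ∩ B ∪ E ∪ G) := by rw [hsplit, hunion]; gcongr
    _ ≤ waveSup μ (a * s + b * t) := measure_le_waveSup μ (((hA.inter hB).union hE).union hG) <|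
      calc volume (A ∩ B ∪ E ∪ G)
          ≤ ENNReal.ofReal a * volume A + ENNReal.ofReal b * volume B := by
            rw [hsplit, hunion]; gcongr
        _ ≤ ENNReal.ofReal a * ENNReal.ofReal s + ENNReal.ofReal b * ENNReal.ofReal t := by
            gcongr
        _ = ENNReal.ofReal (a * s + b * t) := by
            rw [ENNReal.ofReal_add (by positivity) (by positivity), ENNReal.ofReal_mul ha,
              ENNReal.ofReal_mul hb]

lemma mul_waveSup_add_mul_waveSup_le (μ : Measure ℝ) [IsFiniteMeasure μ] {s t a b : ℝ}
    (hs : 0 ≤ s) (ht : 0 ≤ t) (ha : 0 ≤ a) (hb : 0 ≤ b) (hab : a + b = 1) :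
    ENNReal.ofReal a * waveSup μ s + ENNReal.ofReal b * waveSup μ t ≤
      waveSup μ (a * s + b * t) := by
  have hempty (r : ℝ) : ∃ A : Set ℝ, MeasurableSet A ∧ volume A ≤ ENNReal.ofReal r :=
    ⟨∅, MeasurableSet.empty, by simp⟩
  rw [waveSup, waveSup]
  simp only [iSup_and', ENNReal.mul_iSup]
  exact ENNReal.biSup_add_biSup_le' (hempty s) (hempty t) fun A hA B hB =>
    mul_measure_add_mul_measure_le_waveSup μ hs ht ha hb hab hA.1 hB.1 hA.2 hB.2

/-- For a finite positive measure `μ` on `ℝ`, the function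
`F(s) = sup { μ(A) : Leb(A) ≤ s }` is nondecreasing and concave on `[0,∞)`. -/
theorem waveSup_monotone_concave
    (μ : Measure ℝ) [IsFiniteMeasure μ] :
    MonotoneOn (fun s => (waveSup μ s).toReal) (Set.Ici (0:ℝ)) ∧
      ConcaveOn ℝ (Set.Ici (0:ℝ)) (fun s => (waveSup μ s).toReal) := by
  refine ⟨fun s _ t _ h => ENNReal.toReal_mono (waveSup_ne_top μ t) (waveSup_mono μ h),
    convex_Ici 0, fun s hs t ht a b ha hb hab => ?_⟩
  have h := ENNReal.toReal_mono (waveSup_ne_top μ _)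
    (mul_waveSup_add_mul_waveSup_le μ hs ht ha hb hab)
  rwa [ENNReal.toReal_add (ENNReal.mul_ne_top ENNReal.ofReal_ne_top (waveSup_ne_top μ s))
    (ENNReal.mul_ne_top ENNReal.ofReal_ne_top (waveSup_ne_top μ t)), ENNReal.toReal_mul,
    ENNReal.toReal_mul, ENNReal.toReal_ofReal ha, ENNReal.toReal_ofReal hb] at h
end
end

section
/- Let w : ℝ → ℝ be a bounded odd nondecreasing function that is concave (hence continuous) on (0,∞), and let ν be the Lebesgue–Stieltjes measure of the right-continuous modification of w, so that ν({0}) = 2·w(0+) where w(0+) is the right limit of w at 0. Then for every s > 0, sup{ν(B) : B ⊆ ℝ Borel, Leb(B) ≤ 2s} = 2·w(s). -/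
open MeasureTheory Set Filter Function
open scoped ENNReal

noncomputable section

open scoped NNReal

/-- Measures on `ℝ` are dominated by a Stieltjes measure as soon as they are on the intervals
`(a, b]`. -/
theorem StieltjesFunction.le_measure_of_forall_Ioc (g : StieltjesFunction ℝ) (μ : Measure ℝ)
    (h : ∀ a b, a < b → μ (Ioc a b) ≤ ENNReal.ofReal (g b - g a)) : μ ≤ g.measure := by
  have hle : μ.toOuterMeasure ≤ g.outer := by
    refine OuterMeasure.le_ofFunction.2 fun t => ?_
    rw [g.length_eq]
    refine le_iInf fun a => le_iInf fun b => le_iInf fun hab => ?_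
    have hbot : (botSet : Set ℝ) = ∅ := by
      ext x
      simp [botSet]
    rw [hbot, sdiff_empty] at hab
    rcases lt_or_ge a b with hlt | hge
    · exact (measure_mono hab).trans (h a b hlt)
    · rw [Ioc_eq_empty hge.not_gt, subset_empty_iff] at hab
      simp [hab]
  refine Measure.le_iff'.2 fun t => ?_
  rw [StieltjesFunction.measure]
  exact hle t

/-- If `μ ≤ c • ρ` off `I` and `c • ρ ≤ μ` on `I`, then `I` maximizes `μ` among the sets of
`ρ`-measure at most `ρ I`. -/
theorem MeasureTheory.Measure.apply_le_of_density_threshold {α : Type*} [MeasurableSpace α]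
    {μ ρ : Measure α} {c : ℝ≥0} {I B : Set α} (hI : MeasurableSet I) (hB : MeasurableSet B)
    (hout : μ.restrict Iᶜ ≤ c • ρ) (hin : (c • ρ).restrict I ≤ μ)
    (hfin : ρ I ≠ ∞) (hle : ρ B ≤ ρ I) : μ B ≤ μ I := by
  have hdiff : ρ (B \ I) ≤ ρ (I \ B) := by
    have hsum : ρ (I ∩ B) + ρ (B \ I) ≤ ρ (I ∩ B) + ρ (I \ B) := by
      rw [measure_inter_add_sdiff I hB, inter_comm, measure_inter_add_sdiff B hI]
      exact hle
    exact (ENNReal.add_le_add_iff_left (measure_ne_top_of_subset inter_subset_left hfin)).1 hsum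
  calc μ B = μ (B ∩ I) + μ (B \ I) := (measure_inter_add_sdiff B hI).symm
    _ ≤ μ (B ∩ I) + (c • ρ) (B \ I) := by
        refine add_le_add_right ?_ _
        have h := hout (B \ I)
        rwa [Measure.restrict_apply (hB.diff hI), inter_eq_left.2 fun x hx => hx.2] at h
    _ ≤ μ (B ∩ I) + (c • ρ) (I \ B) := by
        refine add_le_add_right ?_ _
        simp only [Measure.smul_apply]
        gcongr
    _ ≤ μ (B ∩ I) + μ (I \ B) := by
        refine add_le_add_right ?_ _
        have h := hin (I \ B)
        rwa [Measure.restrict_apply (hI.diff hB), inter_eq_left.2 sdiff_subset] at h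
    _ = μ I := by rw [inter_comm, measure_inter_add_sdiff I hB]

/-- A supergradient at `s`: secant slopes are at least `c` to the left of `s`, and at most `c`
to its right. -/
theorem ConcaveOn.exists_supergradient_of_monotone {w : ℝ → ℝ}
    (hconc : ConcaveOn ℝ (Ioi 0) w) (hmono : Monotone w) {s : ℝ} (hs : 0 < s) :
    ∃ c : ℝ≥0, (∀ x y, 0 < x → x ≤ y → y ≤ s → c * (y - x) ≤ w y - w x) ∧
      ∀ x y, s ≤ x → x ≤ y → w y - w x ≤ c * (y - x) := by
  set S : Set ℝ := (fun x => (w s - w x) / (s - x)) '' Ioo 0 s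
  have hne : S.Nonempty := (nonempty_Ioo.2 hs).image _
  have hnonneg : ∀ m ∈ S, 0 ≤ m := by
    rintro _ ⟨x, hx, rfl⟩
    exact div_nonneg (sub_nonneg.2 (hmono hx.2.le)) (sub_nonneg.2 hx.2.le)
  have hleft : ∀ x, 0 < x → x < s → sInf S ≤ (w s - w x) / (s - x) := fun x hx hxs =>
    csInf_le ⟨0, hnonneg⟩ ⟨x, ⟨hx, hxs⟩, rfl⟩
  have hright : ∀ y, s < y → (w y - w s) / (y - s) ≤ sInf S := fun y hy =>
    le_csInf hne <| by
      rintro _ ⟨x, hx, rfl⟩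
      exact hconc.slope_anti_adjacent hx.1 (hs.trans hy) hx.2 hy
  refine ⟨NNReal.mk (sInf S) (Real.sInf_nonneg hnonneg), fun x y hx hxy hys => ?_, fun x y hsx hxy => ?_⟩
  · rw [NNReal.coe_mk]
    rcases hxy.eq_or_lt with rfl | hxy
    · simp
    rw [← le_div_iff₀ (sub_pos.2 hxy)]
    rcases hys.eq_or_lt with rfl | hys
    · exact hleft x hx hxy
    · exact (hleft y (hx.trans hxy) hys).trans (hconc.slope_anti_adjacent hx hs hxy hys)
  · rw [NNReal.coe_mk]
    rcases hxy.eq_or_lt with rfl | hxy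
    · simp
    rw [← div_le_iff₀ (sub_pos.2 hxy)]
    rcases hsx.eq_or_lt with rfl | hsx
    · exact hright y hxy
    · exact (hconc.slope_anti_adjacent hs (hs.trans (hsx.trans hxy)) hsx hxy).trans (hright x hsx)

/-- For an odd nondecreasing function, a lower bound on the secant slopes on `(0, s]` extends to
`[-s, s]`. -/
theorem mul_sub_le_of_odd_of_monotone {w : ℝ → ℝ} (hmono : Monotone w)
    (hodd : ∀ x, w (-x) = -w x) {s c : ℝ}
    (h : ∀ x y, 0 < x → x ≤ y → y ≤ s → c * (y - x) ≤ w y - w x)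
    {x y : ℝ} (hx : -s ≤ x) (hxy : x ≤ y) (hy : y ≤ s) : c * (y - x) ≤ w y - w x := by
  have hzero : w 0 = 0 := by
    have := hodd 0
    rw [neg_zero] at this
    linarith
  have horigin : ∀ z, 0 ≤ z → z ≤ s → c * z ≤ w z := by
    intro z hz hzs
    rcases hz.eq_or_lt with rfl | hz
    · simp [hzero]
    have hlim : Tendsto (fun t => c * (z - t)) (nhdsWithin 0 (Ioi 0)) (nhds (c * (z - 0))) :=
      (Continuous.tendsto (by fun_prop) 0).mono_left nhdsWithin_le_nhds
    rw [sub_zero] at hlim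
    refine le_of_tendsto hlim ?_
    filter_upwards [Ioo_mem_nhdsGT hz] with t ht
    have := h t z ht.1 ht.2.le hzs
    have := hmono ht.1.le
    linarith
  rcases lt_or_ge 0 x with hx0 | hx0
  · exact h x y hx0 hxy hy
  rcases lt_or_ge y 0 with hy0 | hy0
  · have := h (-y) (-x) (by linarith) (by linarith) (by linarith)
    rw [hodd, hodd] at this
    linarith
  · have hneg := horigin (-x) (by linarith) (by linarith)
    have hpos := horigin y hy0 hy
    rw [hodd] at hneg
    linarith

/-- A lower bound on the secant slopes over `[a, b]` passes to the right limits. -/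
theorem Monotone.mul_sub_le_rightLim_sub {w : ℝ → ℝ} (hmono : Monotone w) {a b c : ℝ}
    (h : ∀ x y, a ≤ x → x ≤ y → y ≤ b → c * (y - x) ≤ w y - w x)
    {x y : ℝ} (hx : a ≤ x) (hxy : x < y) (hy : y ≤ b) :
    c * (y - x) ≤ rightLim w y - rightLim w x := by
  have hlim : Tendsto (fun t => c * (y - t)) (nhdsWithin x (Ioi x)) (nhds (c * (y - x))) :=
    (Continuous.tendsto (by fun_prop) x).mono_left nhdsWithin_le_nhds
  refine _root_.le_of_tendsto hlim ?_
  filter_upwards [Ioo_mem_nhdsGT hxy] with t ht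
  have := h t y (hx.trans ht.1.le) ht.2.le hy
  have := hmono.rightLim_le ht.1
  have := hmono.le_rightLim (le_refl y)
  linarith

/-- For `w` odd, nondecreasing and concave on `(0, ∞)`, the interval `(-s, s]` maximizes the
Lebesgue–Stieltjes measure among the Borel sets of length at most `2 * s`. -/
theorem Monotone.stieltjesFunction_measure_le_Ioc {w : ℝ → ℝ} (hmono : Monotone w)
    (hodd : ∀ x, w (-x) = -w x) (hconc : ConcaveOn ℝ (Ioi 0) w) {s : ℝ} (hs : 0 < s)
    (hright : ∀ x, x ≠ 0 → rightLim w x = w x)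
    {B : Set ℝ} (hB : MeasurableSet B) (hvol : volume B ≤ ENNReal.ofReal (2 * s)) :
    hmono.stieltjesFunction.measure B ≤ hmono.stieltjesFunction.measure (Ioc (-s) s) := by
  obtain ⟨c, hin, hout⟩ := hconc.exists_supergradient_of_monotone hmono hs
  have hscale : (c • (volume : Measure ℝ)) = (c • StieltjesFunction.id).measure := by
    rw [StieltjesFunction.measure_smul, Real.volume_eq_stieltjes_id]
  have hscale_apply : ∀ x, (c • StieltjesFunction.id) x = c * x := fun _ => rfl
  refine Measure.apply_le_of_density_threshold (ρ := volume) (c := c) measurableSet_Ioc hB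
    ?_ ?_ (by simp) (hvol.trans_eq (by rw [Real.volume_Ioc]; ring_nf))
  · rw [hscale]
    refine StieltjesFunction.le_measure_of_forall_Ioc _ _ fun a b hab => ?_
    have htail : ∀ p q, q ≤ -s ∨ s ≤ p → hmono.stieltjesFunction.measure (Ioc p q) ≤
        (c • StieltjesFunction.id).measure (Ioc p q) := by
      intro p q hpq
      rcases lt_or_ge p q with hlt | hge
      · rw [StieltjesFunction.measure_Ioc, StieltjesFunction.measure_Ioc, hscale_apply,
          hscale_apply, ← mul_sub, hmono.stieltjesFunction_eq, hmono.stieltjesFunction_eq]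
        refine ENNReal.ofReal_le_ofReal ?_
        rcases hpq with hq | hp
        · rw [hright p (by linarith), hright q (by linarith)]
          have := hout (-q) (-p) (by linarith) (by linarith)
          rw [hodd, hodd] at this
          linarith
        · rw [hright p (by linarith), hright q (by linarith)]
          exact hout p q hp hlt.le
      · simp [Ioc_eq_empty hge.not_gt]
    have hsub : Ioc a b ∩ (Ioc (-s) s)ᶜ ⊆ Ioc a (b ⊓ -s) ∪ Ioc (a ⊔ s) b := by
      rintro x ⟨⟨hax, hxb⟩, hx⟩
      rcases le_or_gt x (-s) with hxs | hxs
      · exact Or.inl ⟨hax, le_inf hxb hxs⟩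
      · exact Or.inr ⟨sup_lt_iff.2 ⟨hax, not_le.1 fun h => hx ⟨hxs, h⟩⟩, hxb⟩
    have hdisj : Disjoint (Ioc a (b ⊓ -s)) (Ioc (a ⊔ s) b) :=
      disjoint_left.2 fun x hx hx' => by
        have := hx.2.trans inf_le_right
        have := le_sup_right.trans_lt hx'.1
        linarith
    rw [Measure.restrict_apply measurableSet_Ioc, ← StieltjesFunction.measure_Ioc]
    refine (measure_mono hsub).trans ((measure_union_le _ _).trans ((add_le_add
      (htail _ _ (Or.inl inf_le_right)) (htail _ _ (Or.inr le_sup_right))).trans ?_))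
    rw [← measure_union hdisj measurableSet_Ioc]
    exact measure_mono (union_subset (Ioc_subset_Ioc_right inf_le_left)
      (Ioc_subset_Ioc_left le_sup_left))
  · refine StieltjesFunction.le_measure_of_forall_Ioc _ _ fun a b hab => ?_
    rw [Measure.restrict_apply measurableSet_Ioc, Ioc_inter_Ioc, hscale,
      StieltjesFunction.measure_Ioc, hscale_apply, hscale_apply]
    rcases lt_or_ge (a ⊔ -s) (b ⊓ s) with hlt | hge
    · refine ENNReal.ofReal_le_ofReal ?_
      rw [← mul_sub]
      refine (hmono.mul_sub_le_rightLim_sub (fun x y hx hxy hy =>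
        mul_sub_le_of_odd_of_monotone hmono hodd hin hx hxy hy)
        le_sup_right hlt inf_le_right).trans ?_
      exact sub_le_sub (hmono.rightLim inf_le_left) (hmono.rightLim le_sup_left)
    · rw [ENNReal.ofReal_of_nonpos]
      · exact zero_le
      · rw [← mul_sub]
        exact mul_nonpos_of_nonneg_of_nonpos c.2 (sub_nonpos.2 hge)

/-- For a bounded odd nondecreasing function `w`, concave on `(0,∞)`, with
Lebesgue–Stieltjes measure `ν` of its right-continuous modification (so that
`ν({0}) = 2 w(0+)`), one has `sup { ν(B) : Leb(B) ≤ 2s } = 2 w(s)` for every `s > 0`. -/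
theorem waveSup_stieltjes_of_odd_concave
    (w : ℝ → ℝ) (hw_bdd : ∃ M, ∀ x, |w x| ≤ M)
    (hw_mono : Monotone w) (hw_odd : ∀ x, w (-x) = -w x)
    (hw_concave : ConcaveOn ℝ (Set.Ioi 0) w)
    (hν0 : hw_mono.stieltjesFunction.measure {0}
        = ENNReal.ofReal (2 * Function.rightLim w 0)) :
    ∀ s > 0, waveSup hw_mono.stieltjesFunction.measure (2 * s)
        = ENNReal.ofReal (2 * w s) := by
  intro s hs
  have hcont : ∀ x, 0 < x → ContinuousAt w x := fun x hx =>
    (hw_concave.continuousOn isOpen_Ioi).continuousAt (Ioi_mem_nhds hx)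
  have hright : ∀ x, x ≠ 0 → rightLim w x = w x := by
    intro x hx
    refine ContinuousWithinAt.rightLim_eq (ContinuousAt.continuousWithinAt ?_)
    rcases hx.lt_or_gt with hneg | hpos
    · have heq : w = fun t => -w (-t) := by
        ext t
        rw [hw_odd, neg_neg]
      rw [heq]
      exact (ContinuousAt.comp (f := fun t : ℝ => -t) (hcont (-x) (neg_pos.2 hneg))
        continuousAt_neg).neg
    · exact hcont x hpos
  have hIoc : hw_mono.stieltjesFunction.measure (Ioc (-s) s) = ENNReal.ofReal (2 * w s) := by
    rw [StieltjesFunction.measure_Ioc, hw_mono.stieltjesFunction_eq, hw_mono.stieltjesFunction_eq,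
      hright s hs.ne', hright (-s) (neg_ne_zero.2 hs.ne'), hw_odd]
    ring_nf
  rw [← hIoc]
  refine le_antisymm (iSup_le fun B => iSup_le fun hB => iSup_le fun hvol =>
    hw_mono.stieltjesFunction_measure_le_Ioc hw_odd hw_concave hs hright hB hvol) ?_
  refine le_iSup_of_le (Ioc (-s) s) (le_iSup_of_le measurableSet_Ioc (le_iSup_of_le ?_ le_rfl))
  rw [Real.volume_Ioc]
  ring_nf
  exact le_rfl
end
end
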